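/- Let C be a regular Ord-category with binary coproducts and Y an object of C. Let e: 3Y ↠ D, ⟨d₁,d₂⟩: D ↣ 2Y×2Y be the (so-morphism, ff-monomorphism) factorisation of the morphism 3Y → 2Y×2Y whose three cocomponents are ⟨ι₁,ι₂⟩, ⟨ι₂,ι₂⟩ and ⟨ι₂,ι₁⟩ (so that (ι₁,ι₂) ∈_Y D, (ι₂,ι₂) ∈_Y D, (ι₂,ι₁) ∈_Y D). Then Y is an Ord-W-Mal'tsev object in C if and only if (ι₁,ι₁) ∈_Y D_*. -/

import Mathlib

open CategoryTheory

universe w v u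

/-- An `Ord`-enrichment of a category: a preorder on each hom-set,
preserved by composition on both sides. -/
class OrdEnrichment (C : Type u) [Category.{v} C] : Type (max u v) where
  ord : ∀ {X Y : C}, (X ⟶ Y) → (X ⟶ Y) → Prop
  ord_refl : ∀ {X Y : C} (f : X ⟶ Y), ord f f
  ord_trans : ∀ {X Y : C} {f g h : X ⟶ Y}, ord f g → ord g h → ord f h
  precomp_ord : ∀ {X Y Z : C} (e : X ⟶ Y) {f g : Y ⟶ Z}, ord f g → ord (e ≫ f) (e ≫ g)
  postcomp_ord : ∀ {X Y Z : C} {f g : X ⟶ Y} (h : Y ⟶ Z), ord f g → ord (f ≫ h) (g ≫ h)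

/-- The preorder on hom-sets of an `Ord`-category. -/
def homLe {C : Type u} [Category.{v} C] [OrdEnrichment C] {X Y : C} (f g : X ⟶ Y) : Prop :=
  OrdEnrichment.ord f g

infixl:50 " ≼ " => homLe

section

variable {C : Type u} [Category.{v} C] [OrdEnrichment C]

/-- A full (ff-) morphism. -/
def IsFF {X Y : C} (m : X ⟶ Y) : Prop :=
  ∀ {A : C} (a a' : A ⟶ X), (a ≫ m) ≼ (a' ≫ m) → a ≼ a'

/-- An ff-monomorphism: a full monomorphism. -/
def IsFFMono {X Y : C} (m : X ⟶ Y) : Prop := IsFF m ∧ Mono m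

/-- An so-morphism: a morphism left orthogonal to every ff-monomorphism. -/
def IsSO {A B : C} (e : A ⟶ B) : Prop :=
  ∀ {X Y : C} (m : X ⟶ Y), IsFFMono m → ∀ (u : A ⟶ X) (v : B ⟶ Y),
    u ≫ m = e ≫ v → ∃ d : B ⟶ X, e ≫ d = u ∧ d ≫ m = v

/-- The (strict) comma object square for the ordered pair `(f, g)`. -/
structure IsCommaSq {X Y Z : C} (f : X ⟶ Y) (g : Z ⟶ Y) (P : C)
    (π₁ : P ⟶ X) (π₂ : P ⟶ Z) : Prop where
  le : (π₁ ≫ f) ≼ (π₂ ≫ g)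
  lift : ∀ {A : C} (α : A ⟶ X) (β : A ⟶ Z), (α ≫ f) ≼ (β ≫ g) →
    ∃! h : A ⟶ P, h ≫ π₁ = α ∧ h ≫ π₂ = β
  lift_ord : ∀ {A : C} {h h' : A ⟶ P}, (h ≫ π₁) ≼ (h' ≫ π₁) → (h ≫ π₂) ≼ (h' ≫ π₂) → h ≼ h'

/-- A 2-pullback square (pullback with the `Ord`-enriched universal property). -/
structure Is2Pullback {X Y Z : C} (f : X ⟶ Z) (g : Y ⟶ Z) (P : C)
    (p : P ⟶ X) (q : P ⟶ Y) : Prop where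
  comm : p ≫ f = q ≫ g
  lift : ∀ {A : C} (a : A ⟶ X) (b : A ⟶ Y), a ≫ f = b ≫ g →
    ∃! h : A ⟶ P, h ≫ p = a ∧ h ≫ q = b
  lift_ord : ∀ {A : C} {h h' : A ⟶ P}, (h ≫ p) ≼ (h' ≫ p) → (h ≫ q) ≼ (h' ≫ q) → h ≼ h'

/-- A binary 2-product. -/
structure Is2Product (X Y : C) (P : C) (p : P ⟶ X) (q : P ⟶ Y) : Prop where
  lift : ∀ {A : C} (a : A ⟶ X) (b : A ⟶ Y), ∃! h : A ⟶ P, h ≫ p = a ∧ h ≫ q = b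
  lift_ord : ∀ {A : C} {h h' : A ⟶ P}, (h ≫ p) ≼ (h' ≫ p) → (h ≫ q) ≼ (h' ≫ q) → h ≼ h'

/-- A 2-equalizer. -/
structure Is2Equalizer {X Y : C} (f g : X ⟶ Y) (E : C) (i : E ⟶ X) : Prop where
  comm : i ≫ f = i ≫ g
  lift : ∀ {A : C} (a : A ⟶ X), a ≫ f = a ≫ g → ∃! h : A ⟶ E, h ≫ i = a
  lift_ord : ∀ {A : C} {h h' : A ⟶ E}, (h ≫ i) ≼ (h' ≫ i) → h ≼ h'

/-- A bicoinserter of a parallel pair. -/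
structure IsBicoinserter {X A E : C} (a b : X ⟶ A) (e : A ⟶ E) : Prop where
  le : (a ≫ e) ≼ (b ≫ e)
  desc : ∀ {F : C} (f : A ⟶ F), (a ≫ f) ≼ (b ≫ f) →
    ∃ t : E ⟶ F, (e ≫ t) ≼ f ∧ f ≼ (e ≫ t)
  desc_ord : ∀ {F : C} {f f' : A ⟶ F} {t t' : E ⟶ F},
    (e ≫ t) ≼ f → f ≼ (e ≫ t) → (e ≫ t') ≼ f' → f' ≼ (e ≫ t') → f ≼ f' → t ≼ t'

/-- A relation from `X` to `Y` in an `Ord`-category: a jointly ff-monomorphic span. -/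
structure RelStr (X Y : C) : Type (max u v) where
  obj : C
  p : obj ⟶ X
  q : obj ⟶ Y
  jointly_ff : ∀ {A : C} (a a' : A ⟶ obj), (a ≫ p) ≼ (a' ≫ p) → (a ≫ q) ≼ (a' ≫ q) → a ≼ a'
  jointly_mono : ∀ {A : C} (a a' : A ⟶ obj), a ≫ p = a' ≫ p → a ≫ q = a' ≫ q → a = a'

/-- `(x, y) ∈_A R`. -/
def RelStr.Mem {X Y : C} (R : RelStr X Y) {A : C} (x : A ⟶ X) (y : A ⟶ Y) : Prop :=
  ∃ h : A ⟶ R.obj, h ≫ R.p = x ∧ h ≫ R.q = y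

/-- `R ⊆ S`: `R` factors through `S` (over `X × Y`). -/
def RelStr.Sub {X Y : C} (R S : RelStr X Y) : Prop :=
  ∃ φ : R.obj ⟶ S.obj, φ ≫ S.p = R.p ∧ φ ≫ S.q = R.q

/-- `R ≅ S`: mutual factorisation. -/
def RelStr.Iso {X Y : C} (R S : RelStr X Y) : Prop := R.Sub S ∧ S.Sub R

/-- The opposite relation `R°`. -/
def RelStr.op {X Y : C} (R : RelStr X Y) : RelStr Y X where
  obj := R.obj
  p := R.q
  q := R.p
  jointly_ff := fun a a' h1 h2 => R.jointly_ff a a' h2 h1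
  jointly_mono := fun a a' h1 h2 => R.jointly_mono a a' h2 h1

/-- A relation is an (order) ideal when it is closed under lowering the first
coordinate and raising the second coordinate. -/
def IsIdealRel {X Y : C} (R : RelStr X Y) : Prop :=
  ∀ {A : C} (x x' : A ⟶ X) (y y' : A ⟶ Y), x' ≼ x → R.Mem x y → y ≼ y' → R.Mem x' y'

/-- The relation `f_♯` given by the span `(1_X, f)`. -/
def sharpRel {X Y : C} (f : X ⟶ Y) : RelStr X Y where
  obj := X
  p := 𝟙 X
  q := f
  jointly_ff := fun a a' h1 _ => by simpa using h1
  jointly_mono := fun a a' h1 _ => by simpa using h1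

/-- The relation `f°`, the opposite of `f_♯`. -/
def cosharpRel {X Y : C} (f : X ⟶ Y) : RelStr Y X := (sharpRel f).op

/-- `M` is the meet (intersection) `R ∧ S` of two relations. -/
def IsMeetRel {X Y : C} (R S M : RelStr X Y) : Prop :=
  M.Sub R ∧ M.Sub S ∧
    ∀ {A : C} (x : A ⟶ X) (y : A ⟶ Y), R.Mem x y → S.Mem x y → M.Mem x y

/-- `T` is the composite `S ∘ R` of the relations `R : X ↬ Y` and `S : Y ↬ Z`,
obtained via the (so-morphism, ff-monomorphism) factorisation of the span
given by the 2-pullback over the middle object. -/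
def IsCompositeRel {X Y Z : C} (R : RelStr X Y) (S : RelStr Y Z) (T : RelStr X Z) : Prop :=
  ∃ (P : C) (p₁ : P ⟶ R.obj) (p₂ : P ⟶ S.obj) (e : P ⟶ T.obj),
    Is2Pullback R.q S.p P p₁ p₂ ∧ IsSO e ∧ e ≫ T.p = p₁ ≫ R.p ∧ e ≫ T.q = p₂ ≫ S.q

/-- `R` is the ideal `f_* = f / 1_Y : X ↬ Y`. -/
def IsStarRel {X Y : C} (f : X ⟶ Y) (R : RelStr X Y) : Prop :=
  IsCommaSq f (𝟙 Y) R.obj R.p R.q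

/-- `R` is the ideal `f^* = 1_Y / f : Y ↬ X`. -/
def IsCostarRel {X Y : C} (f : X ⟶ Y) (R : RelStr Y X) : Prop :=
  IsCommaSq (𝟙 Y) f R.obj R.p R.q

/-- `R` is the identity ideal `I_X = 1_X / 1_X`. -/
def IsIdRel (X : C) (R : RelStr X X) : Prop :=
  IsCommaSq (𝟙 X) (𝟙 X) R.obj R.p R.q

/-- `S` is the 2-pullback of the relation `R ↣ X × Y` along `f × g`. -/
def IsRelPullback {X Y U V : C} (R : RelStr X Y) (f : U ⟶ X) (g : V ⟶ Y)
    (S : RelStr U V) : Prop :=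
  ∃ h : S.obj ⟶ R.obj, h ≫ R.p = S.p ≫ f ∧ h ≫ R.q = S.q ≫ g ∧
    ∀ {A : C} (a : A ⟶ U) (b : A ⟶ V) (c : A ⟶ R.obj),
      c ≫ R.p = a ≫ f → c ≫ R.q = b ≫ g →
      ∃ d : A ⟶ S.obj, d ≫ S.p = a ∧ d ≫ S.q = b ∧ d ≫ h = c

/-- A binary 2-coproduct. -/
structure Is2Coproduct (X Y : C) (P : C) (i : X ⟶ P) (j : Y ⟶ P) : Prop where
  desc : ∀ {A : C} (a : X ⟶ A) (b : Y ⟶ A), ∃! h : P ⟶ A, i ≫ h = a ∧ j ≫ h = b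
  desc_ord : ∀ {A : C} {h h' : P ⟶ A}, (i ≫ h) ≼ (i ≫ h') → (j ≫ h) ≼ (j ≫ h') → h ≼ h'

/-- A ternary 2-coproduct. -/
structure Is3Coproduct (X Y Z : C) (P : C) (i : X ⟶ P) (j : Y ⟶ P) (k : Z ⟶ P) : Prop where
  desc : ∀ {A : C} (a : X ⟶ A) (b : Y ⟶ A) (c : Z ⟶ A),
    ∃! h : P ⟶ A, i ≫ h = a ∧ j ≫ h = b ∧ k ≫ h = c
  desc_ord : ∀ {A : C} {h h' : P ⟶ A},
    (i ≫ h) ≼ (i ≫ h') → (j ≫ h) ≼ (j ≫ h') → (k ≫ h) ≼ (k ≫ h') → h ≼ h'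

/-- Reflexivity of a relation on `X`: the diagonal factors through it. -/
def ReflexiveRel {X : C} (R : RelStr X X) : Prop := R.Mem (𝟙 X) (𝟙 X)

/-- Transitivity of a relation on `X`: `R ∘ R ⊆ R`. -/
def TransitiveRel {X : C} (R : RelStr X X) : Prop :=
  ∀ T : RelStr X X, IsCompositeRel R R T → T.Sub R

/-- A congruence: a reflexive and transitive ideal. -/
def IsCongruence {X : C} (R : RelStr X X) : Prop :=
  IsIdealRel R ∧ ReflexiveRel R ∧ TransitiveRel R

/-- An effective congruence: `R ≅ f^* ∘ f_*` for some morphism `f`. -/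
def EffectiveCongruence {X : C} (R : RelStr X X) : Prop :=
  ∃ (Y : C) (f : X ⟶ Y) (Fstar : RelStr X Y) (Fco : RelStr Y X) (T : RelStr X X),
    IsStarRel f Fstar ∧ IsCostarRel f Fco ∧ IsCompositeRel Fstar Fco T ∧ R.Iso T

/-- The `Ord`-enriched difunctionality property of a relation. -/
def OrdDifunctional {X Y : C} (D : RelStr X Y) : Prop :=
  ∀ {A : C} (x u u' : A ⟶ X) (y y' v : A ⟶ Y),
    D.Mem x y → y ≼ y' → D.Mem u y' → u ≼ u' → D.Mem u' v → D.Mem x v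

end

/-- A regular `Ord`-category: finite weighted limits, an
(so-morphism, ff-monomorphism) factorisation system, so-morphisms stable under
2-pullbacks, and every so-morphism the bicoinserter of its comma object projections. -/
structure IsRegularOrd (C : Type u) [Category.{v} C] [OrdEnrichment C] : Prop where
  hasTerminal : ∃ T : C, ∀ A : C, ∃ f : A ⟶ T, ∀ g : A ⟶ T, g = f
  has2Products : ∀ X Y : C, ∃ (P : C) (p : P ⟶ X) (q : P ⟶ Y), Is2Product X Y P p q
  has2Equalizers : ∀ {X Y : C} (f g : X ⟶ Y), ∃ (E : C) (i : E ⟶ X), Is2Equalizer f g E i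
  has2Pullbacks : ∀ {X Y Z : C} (f : X ⟶ Z) (g : Y ⟶ Z),
    ∃ (P : C) (p : P ⟶ X) (q : P ⟶ Y), Is2Pullback f g P p q
  hasCommaObjects : ∀ {X Y Z : C} (f : X ⟶ Y) (g : Z ⟶ Y),
    ∃ (P : C) (p : P ⟶ X) (q : P ⟶ Z), IsCommaSq f g P p q
  fact : ∀ {X Y : C} (f : X ⟶ Y), ∃ (I : C) (e : X ⟶ I) (m : I ⟶ Y),
    IsSO e ∧ IsFFMono m ∧ e ≫ m = f
  so_pullback_stable : ∀ {X Y Z P : C} (f : X ⟶ Z) (g : Y ⟶ Z) (p : P ⟶ X) (q : P ⟶ Y),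
    Is2Pullback f g P p q → IsSO g → IsSO p
  so_bicoinserter : ∀ {A B P : C} (e : A ⟶ B), IsSO e →
    ∀ (π₁ π₂ : P ⟶ A), IsCommaSq e e P π₁ π₂ → IsBicoinserter π₁ π₂ e

/-- An `Ord`-Mal'tsev category: every ideal is `Ord`-difunctional. -/
def IsOrdMaltsev (C : Type u) [Category.{v} C] [OrdEnrichment C] : Prop :=
  ∀ (X Y : C) (D : RelStr X Y), IsIdealRel D → OrdDifunctional D

/-- An `Ord`-W-Mal'tsev object: every ideal is `Ord`-difunctional with respect to
generalised elements with domain `Y`. -/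
def IsOrdWMaltsevObj {C : Type u} [Category.{v} C] [OrdEnrichment C] (Y : C) : Prop :=
  ∀ (X Z : C) (R : RelStr X Z), IsIdealRel R →
    ∀ (x u u' : Y ⟶ X) (z z' v : Y ⟶ Z),
      R.Mem x z → z ≼ z' → R.Mem u z' → u ≼ u' → R.Mem u' v → R.Mem x v

/-!
An ideal `R : X ↬ Z` absorbs the two order relations in the definition of an `Ord`-W-Mal'tsev
object, so what has to be tested is that `(x, z)`, `(u, z)`, `(u, v) ∈_Y R` imply
`(x, v) ∈_Y R`. The three hypotheses say that the pair `f = (x, u)`, `g = (v, z)` maps the three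
generators of `D` into `R`. As `e` is an so-morphism and `R` an ideal, `f` and `g` then map all of
`D_*` into `R`, and the conclusion is the image of `(ι₁, ι₁)`. The ideal `D_*` is thus the
universal case: membership of `(ι₁, ι₁)` is the property of `Y` for `R = D_*`, `f = g = 1`.
-/

section

variable {C : Type u} [Category.{v} C] [OrdEnrichment C]

theorem homLe.refl {X Y : C} (f : X ⟶ Y) : f ≼ f :=
  OrdEnrichment.ord_refl f

theorem homLe.trans {X Y : C} {f g h : X ⟶ Y} (hfg : f ≼ g) (hgh : g ≼ h) : f ≼ h :=
  OrdEnrichment.ord_trans hfg hgh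

theorem homLe.precomp {X Y Z : C} {f g : Y ⟶ Z} (hfg : f ≼ g) (e : X ⟶ Y) : e ≫ f ≼ e ≫ g :=
  OrdEnrichment.precomp_ord e hfg

theorem homLe.postcomp {X Y Z : C} {f g : X ⟶ Y} (hfg : f ≼ g) (h : Y ⟶ Z) : f ≫ h ≼ g ≫ h :=
  OrdEnrichment.postcomp_ord h hfg

theorem Is2Product.hom_ext {X Y P A : C} {p : P ⟶ X} {q : P ⟶ Y} (hP : Is2Product X Y P p q)
    {s t : A ⟶ P} (hp : s ≫ p = t ≫ p) (hq : s ≫ q = t ≫ q) : s = t :=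
  (hP.lift (t ≫ p) (t ≫ q)).unique ⟨hp, hq⟩ ⟨rfl, rfl⟩

theorem Is3Coproduct.hom_ext {X Y Z P A : C} {i : X ⟶ P} {j : Y ⟶ P} {k : Z ⟶ P}
    (hP : Is3Coproduct X Y Z P i j k) {s t : P ⟶ A} (hi : i ≫ s = i ≫ t) (hj : j ≫ s = j ≫ t)
    (hk : k ≫ s = k ≫ t) : s = t :=
  (hP.desc (i ≫ t) (j ≫ t) (k ≫ t)).unique ⟨hi, hj, hk⟩ ⟨rfl, rfl, rfl⟩

/-- Existence of a binary 2-product of `X` and `Z`. It turns a relation from `X` to `Z` into a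
single ff-monomorphism, to which so-morphisms are orthogonal. -/
def Has2Product (X Z : C) : Prop :=
  ∃ (P : C) (p : P ⟶ X) (q : P ⟶ Z), Is2Product X Z P p q

variable (C) in
/-- The so-morphisms of `C` form a coverage: every morphism into the codomain of an so-morphism
factors through it after restriction along an so-morphism. This is what stability of
so-morphisms under 2-pullbacks is used for. -/
def SOCoverage : Prop :=
  ∀ {A B T : C} (h : A ⟶ T) (e : B ⟶ T), IsSO e →
    ∃ (Q : C) (s : Q ⟶ A) (t : Q ⟶ B), IsSO s ∧ s ≫ h = t ≫ e

theorem IsRegularOrd.soCoverage (hC : IsRegularOrd C) : SOCoverage C := by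
  intro A B T h e he
  obtain ⟨Q, s, t, hQ⟩ := hC.has2Pullbacks h e
  exact ⟨Q, s, t, hC.so_pullback_stable h e s t hQ he, hQ.comm⟩

namespace RelStr

variable {X Z : C}

theorem Mem.precomp {R : RelStr X Z} {A B : C} {x : A ⟶ X} {z : A ⟶ Z} (h : R.Mem x z)
    (k : B ⟶ A) : R.Mem (k ≫ x) (k ≫ z) := by
  obtain ⟨r, rfl, rfl⟩ := h
  exact ⟨k ≫ r, Category.assoc .., Category.assoc ..⟩

theorem mem_generic (R : RelStr X Z) : R.Mem R.p R.q :=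
  ⟨𝟙 R.obj, Category.id_comp _, Category.id_comp _⟩

theorem Mem.map {X' Z' A : C} {S : RelStr X Z} {R : RelStr X' Z'} {f : X ⟶ X'} {g : Z ⟶ Z'}
    {x : A ⟶ X} {z : A ⟶ Z} (h : S.Mem x z) (hSR : R.Mem (S.p ≫ f) (S.q ≫ g)) :
    R.Mem (x ≫ f) (z ≫ g) := by
  obtain ⟨s, rfl, rfl⟩ := h
  simpa only [Category.assoc] using hSR.precomp s

theorem isFFMono_of_comp_eq (R : RelStr X Z) {P : C} {p : P ⟶ X} {q : P ⟶ Z} {m : R.obj ⟶ P}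
    (hp : m ≫ p = R.p) (hq : m ≫ q = R.q) : IsFFMono m where
  left a a' h := by
    have h₁ := homLe.postcomp h p
    have h₂ := homLe.postcomp h q
    simp only [Category.assoc, hp, hq] at h₁ h₂
    exact R.jointly_ff a a' h₁ h₂
  right :=
    ⟨fun a a' h => R.jointly_mono a a'
      (by simpa only [Category.assoc, hp] using congrArg (· ≫ p) h)
      (by simpa only [Category.assoc, hq] using congrArg (· ≫ q) h)⟩

theorem Mem.of_isSO (hXZ : Has2Product X Z) {R : RelStr X Z} {A B : C} {e : A ⟶ B} (he : IsSO e)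
    {x : B ⟶ X} {z : B ⟶ Z} (h : R.Mem (e ≫ x) (e ≫ z)) : R.Mem x z := by
  obtain ⟨P, p, q, hP⟩ := hXZ
  obtain ⟨m, ⟨hmp, hmq⟩, -⟩ := hP.lift R.p R.q
  obtain ⟨n, ⟨rfl, rfl⟩, -⟩ := hP.lift x z
  obtain ⟨r, hrp, hrq⟩ := h
  have hsq : r ≫ m = e ≫ n := hP.hom_ext (by simp [hmp, hrp]) (by simp [hmq, hrq])
  obtain ⟨d, -, rfl⟩ := he m (R.isFFMono_of_comp_eq hmp hmq) r n hsq
  exact ⟨d, by simp [hmp], by simp [hmq]⟩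

end RelStr

theorem Is3Coproduct.mem_iff {X Z A₁ A₂ A₃ P : C} {i : A₁ ⟶ P} {j : A₂ ⟶ P} {k : A₃ ⟶ P}
    (hP : Is3Coproduct A₁ A₂ A₃ P i j k) {R : RelStr X Z} {x : P ⟶ X} {z : P ⟶ Z} :
    R.Mem x z ↔ R.Mem (i ≫ x) (i ≫ z) ∧ R.Mem (j ≫ x) (j ≫ z) ∧ R.Mem (k ≫ x) (k ≫ z) := by
  refine ⟨fun h => ⟨h.precomp i, h.precomp j, h.precomp k⟩, ?_⟩
  rintro ⟨⟨r₁, hp₁, hq₁⟩, ⟨r₂, hp₂, hq₂⟩, ⟨r₃, hp₃, hq₃⟩⟩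
  obtain ⟨r, ⟨rfl, rfl, rfl⟩, -⟩ := hP.desc r₁ r₂ r₃
  simp only [Category.assoc] at hp₁ hq₁ hp₂ hq₂ hp₃ hq₃
  exact ⟨r, hP.hom_ext hp₁ hp₂ hp₃, hP.hom_ext hq₁ hq₂ hq₃⟩

theorem IsCommaSq.mem_iff {X Y Z A : C} {f : X ⟶ Y} {g : Z ⟶ Y} {R : RelStr X Z}
    (hR : IsCommaSq f g R.obj R.p R.q) {x : A ⟶ X} {z : A ⟶ Z} :
    R.Mem x z ↔ x ≫ f ≼ z ≫ g := by
  constructor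
  · rintro ⟨r, rfl, rfl⟩
    simpa only [Category.assoc] using hR.le.precomp r
  · exact fun h => (hR.lift x z h).exists

theorem IsCommaSq.isIdealRel {X Y Z : C} {f : X ⟶ Y} {g : Z ⟶ Y} {R : RelStr X Z}
    (hR : IsCommaSq f g R.obj R.p R.q) : IsIdealRel R := fun _ _ _ _ hx h hz =>
  hR.mem_iff.2 ((hx.postcomp f).trans ((hR.mem_iff.1 h).trans (hz.postcomp g)))

namespace IsCompositeRel

variable {X Y Z : C} {R : RelStr X Y} {S : RelStr Y Z} {T : RelStr X Z}

theorem mem (hT : IsCompositeRel R S T) {A : C} {x : A ⟶ X} {y : A ⟶ Y} {z : A ⟶ Z}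
    (hxy : R.Mem x y) (hyz : S.Mem y z) : T.Mem x z := by
  obtain ⟨P, p₁, p₂, c, hP, -, hcp, hcq⟩ := hT
  obtain ⟨r, rfl, rfl⟩ := hxy
  obtain ⟨s, hs, rfl⟩ := hyz
  obtain ⟨l, ⟨rfl, rfl⟩, -⟩ := hP.lift r s hs.symm
  exact ⟨l ≫ c, by simp [hcp], by simp [hcq]⟩

theorem exists_generic_mem (hT : IsCompositeRel R S T) :
    ∃ (P : C) (c : P ⟶ T.obj) (y : P ⟶ Y),
      IsSO c ∧ R.Mem (c ≫ T.p) y ∧ S.Mem y (c ≫ T.q) := by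
  obtain ⟨P, p₁, p₂, c, hP, hc, hcp, hcq⟩ := hT
  exact ⟨P, c, p₁ ≫ R.q, hc, ⟨p₁, hcp.symm, rfl⟩, ⟨p₂, hP.comm.symm, hcq.symm⟩⟩

theorem exists_mem (hC : SOCoverage C) (hT : IsCompositeRel R S T) {A : C} {x : A ⟶ X}
    {z : A ⟶ Z} (h : T.Mem x z) :
    ∃ (Q : C) (s : Q ⟶ A) (y : Q ⟶ Y), IsSO s ∧ R.Mem (s ≫ x) y ∧ S.Mem y (s ≫ z) := by
  obtain ⟨t, rfl, rfl⟩ := h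
  obtain ⟨P, c, y, hc, hR, hS⟩ := hT.exists_generic_mem
  obtain ⟨Q, s, k, hs, hsk⟩ := hC t c hc
  refine ⟨Q, s, k ≫ y, hs, ?_, ?_⟩
  · simpa only [reassoc_of% hsk] using hR.precomp k
  · simpa only [reassoc_of% hsk] using hS.precomp k

theorem isIdealRel (hXZ : Has2Product X Z) (hC : SOCoverage C) (hT : IsCompositeRel R S T)
    (hR : IsIdealRel R) (hS : IsIdealRel S) : IsIdealRel T := by
  intro A x x' z z' hx hxz hz
  obtain ⟨Q, s, y, hs, hxy, hyz⟩ := hT.exists_mem hC hxz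
  have hxy' : R.Mem (s ≫ x') y := hR _ _ _ _ (hx.precomp s) hxy (homLe.refl y)
  have hyz' : S.Mem y (s ≫ z') := hS _ _ _ _ (homLe.refl y) hyz (hz.precomp s)
  exact (hT.mem hxy' hyz').of_isSO hXZ hs

end IsCompositeRel

/-- `T` is the ideal `D_* = (d₂)_* ∘ (d₁)^*` generated by the relation `D`. As with
`IsCompositeRel`, this is a property of `T`, since comma objects and factorisations are not
chosen. -/
def IsGeneratedIdeal {X Z : C} (D T : RelStr X Z) : Prop :=
  ∃ (D₁ : RelStr X D.obj) (D₂ : RelStr D.obj Z),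
    IsCostarRel D.p D₁ ∧ IsStarRel D.q D₂ ∧ IsCompositeRel D₁ D₂ T

namespace IsGeneratedIdeal

variable {X Z : C} {D T : RelStr X Z}

theorem isIdealRel (hXZ : Has2Product X Z) (hC : SOCoverage C) (hT : IsGeneratedIdeal D T) :
    IsIdealRel T := by
  obtain ⟨D₁, D₂, hD₁, hD₂, hcomp⟩ := hT
  exact hcomp.isIdealRel hXZ hC (IsCommaSq.isIdealRel hD₁) (IsCommaSq.isIdealRel hD₂)

theorem mem (hT : IsGeneratedIdeal D T) {A : C} {x : A ⟶ X} {z : A ⟶ Z} (h : D.Mem x z) :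
    T.Mem x z := by
  obtain ⟨D₁, D₂, hD₁, hD₂, hcomp⟩ := hT
  obtain ⟨d, rfl, rfl⟩ := h
  refine hcomp.mem (y := d) ((IsCommaSq.mem_iff hD₁).2 ?_) ((IsCommaSq.mem_iff hD₂).2 ?_)
  · simpa only [Category.comp_id] using homLe.refl (d ≫ D.p)
  · simpa only [Category.comp_id] using homLe.refl (d ≫ D.q)

theorem exists_generic_le (hT : IsGeneratedIdeal D T) :
    ∃ (P : C) (c : P ⟶ T.obj) (d : P ⟶ D.obj),
      IsSO c ∧ c ≫ T.p ≼ d ≫ D.p ∧ d ≫ D.q ≼ c ≫ T.q := by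
  obtain ⟨D₁, D₂, hD₁, hD₂, hcomp⟩ := hT
  obtain ⟨P, c, d, hc, h₁, h₂⟩ := hcomp.exists_generic_mem
  refine ⟨P, c, d, hc, ?_, ?_⟩
  · simpa only [Category.comp_id] using (IsCommaSq.mem_iff hD₁).1 h₁
  · simpa only [Category.comp_id] using (IsCommaSq.mem_iff hD₂).1 h₂

theorem mem_map {X' Z' : C} (hXZ' : Has2Product X' Z') (hT : IsGeneratedIdeal D T)
    {R : RelStr X' Z'} (hR : IsIdealRel R) {f : X ⟶ X'} {g : Z ⟶ Z'}
    (h : R.Mem (D.p ≫ f) (D.q ≫ g)) : R.Mem (T.p ≫ f) (T.q ≫ g) := by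
  obtain ⟨P, c, d, hc, hp, hq⟩ := hT.exists_generic_le
  refine RelStr.Mem.of_isSO hXZ' hc (hR _ _ _ _ ?_ (h.precomp d) ?_)
  · simpa only [Category.assoc] using hp.postcomp f
  · simpa only [Category.assoc] using hq.postcomp g

end IsGeneratedIdeal

theorem isOrdWMaltsevObj_iff_difunctional {Y : C} :
    IsOrdWMaltsevObj Y ↔ ∀ (X Z : C) (R : RelStr X Z), IsIdealRel R →
      ∀ (x u : Y ⟶ X) (z v : Y ⟶ Z), R.Mem x z → R.Mem u z → R.Mem u v → R.Mem x v := by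
  constructor
  · intro hY X Z R hR x u z v hxz huz huv
    exact hY X Z R hR x u u z z v hxz (homLe.refl z) huz (homLe.refl u) huv
  · intro hY X Z R hR x u u' z z' v hxz hz huz' hu hu'v
    have hxz' : R.Mem x z' := hR x x z z' (homLe.refl x) hxz hz
    have huv : R.Mem u v := hR u' u v v hu hu'v (homLe.refl v)
    exact hY X Z R hR x u z' v hxz' huz' huv

theorem statement19_general (hprod : ∀ X Z : C, Has2Product X Z) (hC : SOCoverage C)
    {Y Y2 Y3 : C} {i1 i2 : Y ⟶ Y2} (h2 : Is2Coproduct Y Y Y2 i1 i2)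
    {j1 j2 j3 : Y ⟶ Y3} (h3 : Is3Coproduct Y Y Y Y3 j1 j2 j3)
    {D T : RelStr Y2 Y2} {e : Y3 ⟶ D.obj} (he : IsSO e)
    (hp1 : j1 ≫ e ≫ D.p = i1) (hp2 : j2 ≫ e ≫ D.p = i2) (hp3 : j3 ≫ e ≫ D.p = i2)
    (hq1 : j1 ≫ e ≫ D.q = i2) (hq2 : j2 ≫ e ≫ D.q = i2) (hq3 : j3 ≫ e ≫ D.q = i1)
    (hT : IsGeneratedIdeal D T) :
    IsOrdWMaltsevObj Y ↔ T.Mem i1 i1 := by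
  rw [isOrdWMaltsevObj_iff_difunctional]
  constructor
  · intro hY
    have hgen : T.Mem (e ≫ D.p) (e ≫ D.q) := hT.mem (D.mem_generic.precomp e)
    have hj := h3.mem_iff.1 hgen
    rw [hp1, hp2, hp3, hq1, hq2, hq3] at hj
    obtain ⟨h12, h22, h21⟩ := hj
    exact hY Y2 Y2 T (hT.isIdealRel (hprod Y2 Y2) hC) i1 i2 i2 i1 h12 h22 h21
  · intro h11 X Z R hR x u z v hxz huz huv
    obtain ⟨f, ⟨rfl, rfl⟩, -⟩ := h2.desc x u
    obtain ⟨g, ⟨rfl, rfl⟩, -⟩ := h2.desc v z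
    have hgen : R.Mem (e ≫ D.p ≫ f) (e ≫ D.q ≫ g) := by
      rw [h3.mem_iff]
      simp only [reassoc_of% hp1, reassoc_of% hp2, reassoc_of% hp3, reassoc_of% hq1,
        reassoc_of% hq2, reassoc_of% hq3]
      exact ⟨hxz, huz, huv⟩
    have hD : R.Mem (D.p ≫ f) (D.q ≫ g) := hgen.of_isSO (hprod X Z) he
    exact h11.map (hT.mem_map (hprod X Z) hR hD)

end

/-- Object-wise characterisation of `Ord`-W-Mal'tsev objects in a regular
`Ord`-category with binary coproducts via the
(so-morphism, ff-monomorphism) factorisation of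
`(⟨ι₁,ι₂⟩, ⟨ι₂,ι₂⟩, ⟨ι₂,ι₁⟩) : 3Y → 2Y × 2Y`. -/
theorem statement19 {C : Type u} [Category.{v} C] [OrdEnrichment C] (hC : IsRegularOrd C)
    (hcoprod : ∀ A B : C, ∃ (P : C) (i : A ⟶ P) (j : B ⟶ P), Is2Coproduct A B P i j)
    (Y : C)
    (Y2 : C) (i1 i2 : Y ⟶ Y2) (h2 : Is2Coproduct Y Y Y2 i1 i2)
    (Y3 : C) (j1 j2 j3 : Y ⟶ Y3) (h3 : Is3Coproduct Y Y Y Y3 j1 j2 j3)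
    (a b : Y3 ⟶ Y2)
    (ha1 : j1 ≫ a = i1) (ha2 : j2 ≫ a = i2) (ha3 : j3 ≫ a = i2)
    (hb1 : j1 ≫ b = i2) (hb2 : j2 ≫ b = i2) (hb3 : j3 ≫ b = i1)
    (D : RelStr Y2 Y2) (e : Y3 ⟶ D.obj) (he : IsSO e)
    (hea : e ≫ D.p = a) (heb : e ≫ D.q = b)
    -- `D_* = (d₂)_* ∘ (d₁)^*`, the ideal generated by `D`
    (D1co : RelStr Y2 D.obj) (hD1co : IsCostarRel D.p D1co)
    (D2star : RelStr D.obj Y2) (hD2star : IsStarRel D.q D2star)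
    (Dlower : RelStr Y2 Y2) (hDlower : IsCompositeRel D1co D2star Dlower) :
    IsOrdWMaltsevObj Y ↔ Dlower.Mem i1 i1 := by
  subst hea heb
  exact statement19_general hC.has2Products hC.soCoverage h2 h3 he ha1 ha2 ha3 hb1 hb2 hb3
    ⟨D1co, D2star, hD1co, hD2star, hDlower⟩
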